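/- de Finetti–Hewitt–Savage Theorem (strong form): if A is a compact metric space and (X_n)_n is an exchangeable sequence of A-valued random variables, then the empirical distributions W_N := N^{-1} ∑_{n=1}^N δ_{X_n} converge almost surely in Pr(A) to a random measure W such that: (i) W is a.s. a measurable function of (X_n)_n; (ii) W generates the tail σ-algebra of (X_n)_n up to null sets; (iii) the X_n are conditionally i.i.d. given W. -/

import Mathlib

open MeasureTheory Filter

/-- A permutation of `ℕ` is finitely supported if it fixes all but finitely many elements. -/
def FinitelySupported (σ : Equiv.Perm ℕ) : Prop := {n : ℕ | σ n ≠ n}.Finite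

/-!
By exchangeability the moments `E[1_s(X i) 1_s(X j)]` depend only on whether `i = j`, so the
frequencies of a set `s` are Cauchy in `L²`, at a rate that makes them converge almost surely along
the fourth powers, hence along all `N` since the partial sums are monotone. Their limit is tail
measurable, and averaging over the swaps of `0` with `n → ∞`, which fix tail functions, identifies
it with the conditional probability of `X 0 ∈ s` given the tail. These conditional distributions
form the directing measure `W`; letting `s` range over a countable π-system that is a basis of the
topology gives weak convergence.

Averaging over swaps also replaces the factors `1_{s j}(X j)` one at a time by `W (s j)` under the
integral against any tail function, so on every tail event the law of the sequence is the mixture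
of the i.i.d. laws `W^{⊗ℕ}`. By Kolmogorov's zero-one law `W^{⊗ℕ}` gives a tail event `T` mass `0`
or `1`; the mixture formula then shows that `T` is almost surely the event `{W^{⊗ℕ} T = 1}`, which
is determined by `W`.
-/

open ProbabilityTheory
open scoped ENNReal Topology

/-- The Cesàro mean `N⁻¹ ∑_{n < N} u n`, with value `0` at `N = 0`. -/
noncomputable def cesaroMean (u : ℕ → ℝ) (N : ℕ) : ℝ := (N : ℝ)⁻¹ * ∑ n ∈ Finset.range N, u n

lemma cesaroMean_add (u : ℕ → ℝ) (N m : ℕ) :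
    cesaroMean u (N + m) =
      (N / (N + m) : ℝ) * cesaroMean (fun n => u (n + m)) N +
        (∑ n ∈ Finset.range m, u n) / (N + m) := by
  rcases N.eq_zero_or_pos with rfl | hN
  · simp [cesaroMean, div_eq_inv_mul]
  · have hN' : (N : ℝ) ≠ 0 := by positivity
    rw [cesaroMean, cesaroMean, add_comm N m, Finset.sum_range_add]
    push_cast
    simp only [add_comm m]
    field_simp
    ring

lemma tendsto_cesaroMean_shift_iff {u : ℕ → ℝ} {l : ℝ} (m : ℕ) :
    Tendsto (cesaroMean fun n => u (n + m)) atTop (𝓝 l) ↔ Tendsto (cesaroMean u) atTop (𝓝 l) := by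
  have hratio : Tendsto (fun N : ℕ => (N / (N + m) : ℝ)) atTop (𝓝 1) :=
    tendsto_natCast_div_add_atTop (m : ℝ)
  have hinit : Tendsto (fun N : ℕ => (∑ n ∈ Finset.range m, u n) / (N + m : ℝ)) atTop (𝓝 0) :=
    tendsto_const_nhds.div_atTop
      (tendsto_atTop_add_const_right _ _ tendsto_natCast_atTop_atTop)
  rw [← tendsto_add_atTop_iff_nat (f := cesaroMean u) m]
  simp only [cesaroMean_add]
  constructor <;> intro h
  · simpa using (hratio.mul h).add hinit
  · have hprod := h.sub hinit
    simp only [add_sub_cancel_right, sub_zero] at hprod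
    simpa using (hprod.div hratio one_ne_zero).congr' (by
      filter_upwards [eventually_gt_atTop 0] with N hN
      have : (N : ℝ) ≠ 0 := by positivity
      have : (N + m : ℝ) ≠ 0 := by positivity
      simp only [Pi.div_apply]
      field_simp)

lemma tendsto_cesaroMean_of_tendsto_pow_four {u : ℕ → ℝ} (hu : ∀ n, 0 ≤ u n) {l : ℝ}
    (h : Tendsto (fun k : ℕ => cesaroMean u ((k + 1) ^ 4)) atTop (𝓝 l)) :
    Tendsto (cesaroMean u) atTop (𝓝 l) := by
  have hmono : Monotone fun N => ∑ n ∈ Finset.range N, u n :=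
    monotone_nat_of_le_succ fun N => by
      rw [Finset.sum_range_succ]
      exact le_add_of_nonneg_right (hu N)
  have hdiv : cesaroMean u = fun N => (∑ n ∈ Finset.range N, u n) / N :=
    funext fun N => inv_mul_eq_div _ _
  rw [hdiv] at h ⊢
  refine tendsto_div_of_monotone_of_exists_subseq_tendsto_div _ l hmono fun a ha =>
    ⟨fun k => (k + 1) ^ 4, ?_, (tendsto_pow_atTop four_ne_zero).comp (tendsto_add_atTop_nat 1), h⟩
  have hgrowth : Tendsto (fun k : ℕ => (1 + 1 / ((k : ℝ) + 1)) ^ 4) atTop (𝓝 1) := by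
    simpa using (tendsto_one_div_add_atTop_nhds_zero_nat.const_add (1 : ℝ)).pow 4
  filter_upwards [hgrowth.eventually_le_const ha] with k hk
  push_cast
  calc ((k : ℝ) + 1 + 1) ^ 4 = (1 + 1 / ((k : ℝ) + 1)) ^ 4 * ((k : ℝ) + 1) ^ 4 := by
        rw [← mul_pow]
        field_simp
    _ ≤ a * ((k : ℝ) + 1) ^ 4 := by gcongr

section SecondMoment

variable {Ω : Type*} [MeasurableSpace Ω] {P : Measure Ω} {Y : ℕ → Ω → ℝ} {a b : ℝ}

lemma memLp_cesaroMean {p : ℝ≥0∞} (hY : ∀ n, MemLp (Y n) p P) (N : ℕ) :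
    MemLp (fun ω => cesaroMean (fun n => Y n ω) N) p P :=
  (memLp_finsetSum _ fun n _ => hY n).const_mul _

lemma integral_cesaroMean_mul_cesaroMean (hY : ∀ n, MemLp (Y n) 2 P)
    (ha : ∀ i, ∫ ω, Y i ω * Y i ω ∂P = a) (hb : ∀ i j, i ≠ j → ∫ ω, Y i ω * Y j ω ∂P = b)
    {N M : ℕ} (hN : 0 < N) (hNM : N ≤ M) :
    ∫ ω, cesaroMean (fun n => Y n ω) N * cesaroMean (fun n => Y n ω) M ∂P =
      b + (a - b) / M := by
  have hint (i j : ℕ) : Integrable (fun ω => Y i ω * Y j ω) P := (hY i).integrable_mul (hY j)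
  have hmoment (i j : ℕ) : ∫ ω, Y i ω * Y j ω ∂P = b + if i = j then a - b else 0 := by
    split_ifs with h
    · rw [← h, ha, add_sub_cancel]
    · rw [hb i j h, add_zero]
  have hrow : ∀ i ∈ Finset.range N,
      ∑ j ∈ Finset.range M, ∫ ω, Y i ω * Y j ω ∂P = M * b + (a - b) := fun i hi => by
    have hi' : i < M := (Finset.mem_range.1 hi).trans_le hNM
    simp [hmoment, Finset.sum_add_distrib, hi']
  have hM : 0 < M := hN.trans_le hNM
  calc ∫ ω, cesaroMean (fun n => Y n ω) N * cesaroMean (fun n => Y n ω) M ∂P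
      = ∫ ω, ((N : ℝ)⁻¹ * (M : ℝ)⁻¹) *
          ∑ i ∈ Finset.range N, ∑ j ∈ Finset.range M, Y i ω * Y j ω ∂P := by
        simp only [cesaroMean, mul_mul_mul_comm, Finset.sum_mul_sum]
    _ = ((N : ℝ)⁻¹ * (M : ℝ)⁻¹) *
          ∑ i ∈ Finset.range N, ∑ j ∈ Finset.range M, ∫ ω, Y i ω * Y j ω ∂P := by
        rw [integral_const_mul, integral_finsetSum _ fun i _ => integrable_finsetSum _ fun j _ =>
          hint i j]
        simp only [integral_finsetSum _ fun j _ => hint _ j]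
    _ = b + (a - b) / M := by
        rw [Finset.sum_congr rfl hrow, Finset.sum_const, Finset.card_range, nsmul_eq_mul]
        field_simp

lemma integral_sq_cesaroMean_sub (hY : ∀ n, MemLp (Y n) 2 P)
    (ha : ∀ i, ∫ ω, Y i ω * Y i ω ∂P = a) (hb : ∀ i j, i ≠ j → ∫ ω, Y i ω * Y j ω ∂P = b)
    {N M : ℕ} (hN : 0 < N) (hNM : N ≤ M) :
    ∫ ω, (cesaroMean (fun n => Y n ω) M - cesaroMean (fun n => Y n ω) N) ^ 2 ∂P =
      (a - b) / N - (a - b) / M := by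
  have hint (K L : ℕ) : Integrable
      (fun ω => cesaroMean (fun n => Y n ω) K * cesaroMean (fun n => Y n ω) L) P :=
    (memLp_cesaroMean hY K).integrable_mul (memLp_cesaroMean hY L)
  have hM : 0 < M := hN.trans_le hNM
  calc ∫ ω, (cesaroMean (fun n => Y n ω) M - cesaroMean (fun n => Y n ω) N) ^ 2 ∂P
      = ∫ ω, (cesaroMean (fun n => Y n ω) M * cesaroMean (fun n => Y n ω) M +
          cesaroMean (fun n => Y n ω) N * cesaroMean (fun n => Y n ω) N) -
          2 * (cesaroMean (fun n => Y n ω) N * cesaroMean (fun n => Y n ω) M) ∂P := by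
        congr with ω
        ring
    _ = (b + (a - b) / M) + (b + (a - b) / N) - 2 * (b + (a - b) / M) := by
        rw [integral_sub ((hint M M).fun_add (hint N N)) ((hint N M).const_mul 2),
          integral_add (hint M M) (hint N N), integral_const_mul,
          integral_cesaroMean_mul_cesaroMean hY ha hb hM le_rfl,
          integral_cesaroMean_mul_cesaroMean hY ha hb hN hNM,
          integral_cesaroMean_mul_cesaroMean hY ha hb hN le_rfl]
    _ = (a - b) / N - (a - b) / M := by ring

lemma eLpNorm_cesaroMean_sub_le (hY : ∀ n, MemLp (Y n) 2 P)
    (ha : ∀ i, ∫ ω, Y i ω * Y i ω ∂P = a) (hb : ∀ i j, i ≠ j → ∫ ω, Y i ω * Y j ω ∂P = b)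
    {K N M : ℕ} (hK : 0 < K) (hKN : K ≤ N) (hKM : K ≤ M) :
    eLpNorm (fun ω => cesaroMean (fun n => Y n ω) M - cesaroMean (fun n => Y n ω) N) 2 P ≤
      ENNReal.ofReal √(|a - b| / K) := by
  have hmem : MemLp (fun ω => cesaroMean (fun n => Y n ω) M - cesaroMean (fun n => Y n ω) N) 2 P :=
    (memLp_cesaroMean hY M).sub (memLp_cesaroMean hY N)
  have hsq : ∫ ω, (cesaroMean (fun n => Y n ω) M - cesaroMean (fun n => Y n ω) N) ^ 2 ∂P ≤
      |a - b| / K := by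
    wlog hNM : N ≤ M generalizing N M
    · simpa only [sub_sq_comm] using
        this hKM hKN ((memLp_cesaroMean hY N).sub (memLp_cesaroMean hY M)) (le_of_not_ge hNM)
    have hN : 0 < N := hK.trans_le hKN
    have : (0 : ℝ) < K := by exact_mod_cast hK
    have hinv : (0 : ℝ) ≤ (N : ℝ)⁻¹ - (M : ℝ)⁻¹ := sub_nonneg.2 (by gcongr)
    calc _ = (a - b) * ((N : ℝ)⁻¹ - (M : ℝ)⁻¹) := by
          rw [integral_sq_cesaroMean_sub hY ha hb hN hNM]
          ring
      _ ≤ |a - b| * (K : ℝ)⁻¹ := by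
          gcongr
          · exact le_abs_self _
          · exact (sub_le_self _ (by positivity)).trans (by gcongr)
      _ = |a - b| / K := (div_eq_mul_inv _ _).symm
  calc _ = ENNReal.ofReal
        √(∫ ω, (cesaroMean (fun n => Y n ω) M - cesaroMean (fun n => Y n ω) N) ^ 2 ∂P) := by
        rw [MemLp.eLpNorm_eq_integral_rpow_norm two_ne_zero ENNReal.ofNat_ne_top hmem]
        simp [Real.sqrt_eq_rpow]
    _ ≤ ENNReal.ofReal √(|a - b| / K) := by gcongr

theorem ae_exists_tendsto_cesaroMean (hY : ∀ n, MemLp (Y n) 2 P) (hpos : ∀ n ω, 0 ≤ Y n ω)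
    (ha : ∀ i, ∫ ω, Y i ω * Y i ω ∂P = a) (hb : ∀ i j, i ≠ j → ∫ ω, Y i ω * Y j ω ∂P = b) :
    ∀ᵐ ω ∂P, ∃ l, Tendsto (cesaroMean fun n => Y n ω) atTop (𝓝 l) := by
  let B (k : ℕ) : ℝ := (√|a - b| + 1) * (1 / ((k : ℝ) + 1) ^ 2)
  have hB : Summable B := by
    refine Summable.mul_left _ ?_
    simpa using (summable_nat_add_iff 1).2 (Real.summable_one_div_nat_pow.2 one_lt_two)
  have hcauchy (K n m : ℕ) (hn : K ≤ n) (hm : K ≤ m) :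
      eLpNorm ((fun ω => cesaroMean (fun i => Y i ω) ((n + 1) ^ 4)) -
        fun ω => cesaroMean (fun i => Y i ω) ((m + 1) ^ 4)) 2 P < ENNReal.ofReal (B K) := by
    refine (eLpNorm_cesaroMean_sub_le hY ha hb (K := (K + 1) ^ 4) (by positivity)
      (by gcongr) (by gcongr)).trans_lt ?_
    have hroot : √(((K + 1) ^ 4 : ℕ) : ℝ) = ((K : ℝ) + 1) ^ 2 := by
      rw [Real.sqrt_eq_iff_eq_sq (by positivity) (by positivity)]
      push_cast
      ring
    rw [Real.sqrt_div' _ (by positivity), hroot, div_eq_mul_one_div]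
    refine (ENNReal.ofReal_lt_ofReal_iff (by positivity)).2 ?_
    simp only [B]
    gcongr
    exact lt_add_one _
  filter_upwards [Lp.ae_tendsto_of_cauchy_eLpNorm
    (fun k => (memLp_cesaroMean hY ((k + 1) ^ 4)).aestronglyMeasurable) one_le_two
    hB.tsum_ofReal_ne_top hcauchy] with ω ⟨l, hl⟩
  exact ⟨l, tendsto_cesaroMean_of_tendsto_pow_four (fun n => hpos n ω) hl⟩

end SecondMoment

lemma lintegral_indicator_one_mul {α : Type*} [MeasurableSpace α] {ν : Measure α} {T : Set α}
    (hT : MeasurableSet T) (F : α → ℝ≥0∞) :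
    ∫⁻ x, T.indicator 1 x * F x ∂ν = ∫⁻ x in T, F x ∂ν := by
  simp only [← lintegral_indicator hT, ← Set.indicator_mul_left, Pi.one_apply, one_mul]

lemma setLIntegral_condExpKernel {Ω : Type*} {m : MeasurableSpace Ω} [mΩ : MeasurableSpace Ω]
    [StandardBorelSpace Ω] {P : Measure Ω} [IsFiniteMeasure P] (hm : m ≤ mΩ) {s t : Set Ω}
    (hs : MeasurableSet[m] s) (ht : MeasurableSet t) :
    ∫⁻ ω in s, condExpKernel P m ω t ∂P = P (s ∩ t) := by
  rw [← setLIntegral_trim hm (measurable_condExpKernel ht) hs,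
    ← Measure.compProd_apply_prod hs ht, compProd_trim_condExpKernel hm,
    Measure.map_apply _ (hs.prod ht)]
  · rfl
  · exact (measurable_id'' hm).prodMk measurable_id

lemma finitelySupported_swap (i j : ℕ) : FinitelySupported (Equiv.swap i j) :=
  (Set.toFinite {i, j}).subset fun n hn => by
    simpa using (Equiv.swap_apply_ne_self_iff.1 hn).2

lemma FinitelySupported.mul {σ τ : Equiv.Perm ℕ} (hσ : FinitelySupported σ)
    (hτ : FinitelySupported τ) : FinitelySupported (σ * τ) := by
  refine (hσ.union hτ).subset fun n hn => ?_
  by_contra hfix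
  simp only [Set.mem_union, Set.mem_ofPred_eq, not_or, not_not] at hfix
  exact hn (by rw [Equiv.Perm.mul_apply, hfix.2, hfix.1])

lemma FinitelySupported.eventually_apply_eq {σ : Equiv.Perm ℕ} (hσ : FinitelySupported σ) :
    ∀ᶠ n in atTop, σ n = n := by
  simpa [Nat.cofinite_eq_atTop, FinitelySupported] using hσ.eventually_cofinite_notMem

lemma exists_finitelySupported_apply_zero_one {i j : ℕ} (hij : i ≠ j) :
    ∃ σ : Equiv.Perm ℕ, FinitelySupported σ ∧ σ 0 = i ∧ σ 1 = j := by
  refine ⟨Equiv.swap j (Equiv.swap 0 i 1) * Equiv.swap 0 i,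
    (finitelySupported_swap _ _).mul (finitelySupported_swap _ _), ?_, ?_⟩
  · have hi : i ≠ Equiv.swap 0 i 1 := fun h =>
      zero_ne_one ((Equiv.swap 0 i).injective ((Equiv.swap_apply_left 0 i).trans h))
    rw [Equiv.Perm.mul_apply, Equiv.swap_apply_left, Equiv.swap_apply_of_ne_of_ne hij hi]
  · rw [Equiv.Perm.mul_apply, Equiv.swap_apply_right]

section Tail

variable {Ω A : Type*} [MeasurableSpace A]

/-- The tail σ-algebra of the coordinate process on the path space `ℕ → A`. -/
abbrev pathTail (A : Type*) [MeasurableSpace A] : MeasurableSpace (ℕ → A) :=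
  ⨅ N : ℕ, MeasurableSpace.comap (fun x n => x (n + N)) inferInstance

lemma pathTail_le : pathTail A ≤ MeasurableSpace.pi :=
  (iInf_le _ 0).trans measurable_id.comap_le

lemma measurableSet_pathTail_iff {s : Set (ℕ → A)} :
    MeasurableSet[pathTail A] s ↔
      ∀ N, ∃ B : Set (ℕ → A), MeasurableSet B ∧ (fun x n => x (n + N)) ⁻¹' B = s :=
  MeasurableSpace.measurableSet_iInf

lemma eq_of_eventuallyEq_of_measurable_pathTail {β : Type*} [MeasurableSpace β]
    [MeasurableSingletonClass β] {H : (ℕ → A) → β} (hH : Measurable[pathTail A] H)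
    {x y : ℕ → A} (hxy : x =ᶠ[atTop] y) : H x = H y := by
  obtain ⟨N, hN⟩ := eventually_atTop.1 hxy
  obtain ⟨B, -, hB⟩ := measurableSet_pathTail_iff.1 (hH (measurableSet_singleton (H y))) N
  have hshift : (fun n => x (n + N)) = fun n => y (n + N) :=
    funext fun n => hN _ (Nat.le_add_left N n)
  have hx : x ∈ H ⁻¹' {H y} ↔ y ∈ H ⁻¹' {H y} := by
    simp only [← hB, Set.mem_preimage, hshift]
  simpa using hx

lemma apply_comp_perm_of_measurable_pathTail {β : Type*} [MeasurableSpace β]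
    [MeasurableSingletonClass β] {H : (ℕ → A) → β} (hH : Measurable[pathTail A] H)
    {σ : Equiv.Perm ℕ} (hσ : FinitelySupported σ) (x : ℕ → A) : H (x ∘ σ) = H x :=
  eq_of_eventuallyEq_of_measurable_pathTail hH <|
    hσ.eventually_apply_eq.mono fun _ hn => congrArg x hn

/- If `s` is the preimage of `B N` under the `N`-th shifted process for every `N`, it is also
the preimage of the limsup of the sets `shift N ⁻¹' B N`, which does not see finitely many
coordinates. -/
lemma iInf_comap_shift_eq_comap_pathTail (X : ℕ → Ω → A) :
    ⨅ N : ℕ, MeasurableSpace.comap (fun ω n => X (n + N) ω) inferInstance =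
      (pathTail A).comap fun ω n => X n ω := by
  refine le_antisymm (fun s hs => ?_) (le_iInf fun N => ?_)
  · choose B hB hBs using MeasurableSpace.measurableSet_iInf.1 hs
    refine ⟨limsup (fun N => {x : ℕ → A | (fun n => x (n + N)) ∈ B N}) atTop, ?_, ?_⟩
    · refine measurableSet_pathTail_iff.2 fun M =>
        ⟨limsup (fun N => {x : ℕ → A | (fun n => x (n + N)) ∈ B (N + M)}) atTop,
          .measurableSet_limsup fun N => (hB (N + M)).preimage (by fun_prop), ?_⟩
      rw [← limsup_nat_add (fun N => {x : ℕ → A | (fun n => x (n + N)) ∈ B N}) M]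
      ext x
      simp [mem_limsup_iff_frequently_mem, add_assoc]
    · have hconst (ω : Ω) (N : ℕ) : (fun n => X (n + N) ω) ∈ B N ↔ ω ∈ s := by
        rw [← hBs N]
        rfl
      ext ω
      simp [mem_limsup_iff_frequently_mem, hconst]
  · exact (MeasurableSpace.comap_mono (iInf_le _ N)).trans MeasurableSpace.comap_comp.le

end Tail

section InfinitePi

variable {A : Type*} [MeasurableSpace A]

lemma measurable_infinitePi_const {ι Ω : Type*} {mΩ : MeasurableSpace Ω} {κ : Ω → Measure A}
    [∀ ω, IsProbabilityMeasure (κ ω)] (hκ : Measurable κ) :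
    Measurable fun ω => Measure.infinitePi fun _ : ι => κ ω := by
  refine .measure_of_isPiSystem_of_isProbabilityMeasure generateFrom_squareCylinders.symm
    (isPiSystem_squareCylinders (fun _ => MeasurableSpace.isPiSystem_measurableSet) fun _ => .univ)
    ?_
  rintro - ⟨S, t, ht, rfl⟩
  simp only [Measure.infinitePi_pi _ fun j _ => ht j trivial]
  exact Finset.measurable_fun_prod _ fun j _ => (Measure.measurable_coe (ht j trivial)).comp hκ

lemma pathTail_eq_limsup_comap_eval :
    pathTail A = limsup (fun n => MeasurableSpace.comap (fun x : ℕ → A => x n) inferInstance)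
      atTop := by
  rw [limsup_eq_iInf_iSup_of_nat']
  refine iInf_congr fun N => ?_
  rw [MeasurableSpace.pi, MeasurableSpace.comap_iSup]
  simp only [MeasurableSpace.comap_comp]
  rfl

lemma infinitePi_eq_zero_or_one_of_measurableSet_pathTail {ν : ℕ → Measure A}
    [∀ n, IsProbabilityMeasure (ν n)] {T : Set (ℕ → A)} (hT : MeasurableSet[pathTail A] T) :
    Measure.infinitePi ν T = 0 ∨ Measure.infinitePi ν T = 1 := by
  have hindep : iIndepFun (fun n (x : ℕ → A) => x n) (Measure.infinitePi ν) :=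
    iIndepFun_infinitePi (X := fun _ => id) fun _ => measurable_id
  rw [pathTail_eq_limsup_comap_eval] at hT
  exact measure_zero_or_one_of_measurableSet_limsup_atTop
    (fun n => (measurable_pi_apply n).comap_le) hindep hT

end InfinitePi

section Frequency

variable {A : Type*}

/-- The proportion of the first `N` terms of `x` that lie in `s`, i.e. the mass that the
empirical distribution of these terms gives to `s`. -/
noncomputable def frequency (s : Set A) (x : ℕ → A) (N : ℕ) : ℝ :=
  cesaroMean (fun n => s.indicator 1 (x n)) N

lemma frequency_nonneg (s : Set A) (x : ℕ → A) (N : ℕ) : 0 ≤ frequency s x N :=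
  mul_nonneg (by positivity) <|
    Finset.sum_nonneg fun _ _ => Set.indicator_apply_nonneg fun _ => zero_le_one

lemma frequency_le_one (s : Set A) (x : ℕ → A) (N : ℕ) : frequency s x N ≤ 1 := by
  refine inv_mul_le_one_of_le₀ ?_ N.cast_nonneg
  calc ∑ n ∈ Finset.range N, s.indicator (1 : A → ℝ) (x n) ≤ ∑ _n ∈ Finset.range N, (1 : ℝ) :=
        Finset.sum_le_sum fun _ _ => Set.indicator_le_self' (fun _ _ => zero_le_one) _
    _ = N := by simp

lemma ofReal_frequency (s : Set A) (x : ℕ → A) (N : ℕ) :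
    ENNReal.ofReal (frequency s x N) =
      (N : ℝ≥0∞)⁻¹ * ∑ n ∈ Finset.range N, s.indicator 1 (x n) := by
  rcases N.eq_zero_or_pos with rfl | hN
  · simp [frequency, cesaroMean]
  · have hind (n : ℕ) : 0 ≤ s.indicator (1 : A → ℝ) (x n) :=
      Set.indicator_apply_nonneg fun _ => zero_le_one
    rw [frequency, cesaroMean, ENNReal.ofReal_mul (by positivity),
      ENNReal.ofReal_inv_of_pos (by positivity), ENNReal.ofReal_natCast,
      ENNReal.ofReal_sum_of_nonneg fun n _ => hind n]
    congr with n
    by_cases hx : x n ∈ s <;> simp [hx]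

lemma tendsto_frequency_shift_iff {s : Set A} {x : ℕ → A} {l : ℝ} (m : ℕ) :
    Tendsto (frequency s fun n => x (n + m)) atTop (𝓝 l) ↔ Tendsto (frequency s x) atTop (𝓝 l) :=
  tendsto_cesaroMean_shift_iff (u := fun n => s.indicator 1 (x n)) m

end Frequency

section EmpiricalMeasure

open scoped BoundedContinuousFunction

variable {A : Type*} [MeasurableSpace A]

/-- The empirical distribution of the terms `x 0, …, x N`. There are `N + 1` of them, so that it is
a probability measure for every `N`. -/
noncomputable def empiricalMeasure (x : ℕ → A) (N : ℕ) : Measure A :=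
  ((N + 1 : ℕ) : ℝ≥0∞)⁻¹ • ∑ n ∈ Finset.range (N + 1), Measure.dirac (x n)

instance (x : ℕ → A) (N : ℕ) : IsProbabilityMeasure (empiricalMeasure x N) where
  measure_univ := by
    simp [-Nat.cast_add, empiricalMeasure, ENNReal.inv_mul_cancel]

lemma integral_empiricalMeasure (x : ℕ → A) (N : ℕ) {f : A → ℝ} (hf : StronglyMeasurable f) :
    ∫ a, f a ∂empiricalMeasure x N = cesaroMean (fun n => f (x n)) (N + 1) := by
  rw [empiricalMeasure, integral_smul_measure,
    integral_finsetSum_measure fun n _ => integrable_dirac' hf enorm_lt_top]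
  simp [-Nat.cast_add, integral_dirac' f _ hf, cesaroMean]

lemma real_empiricalMeasure (x : ℕ → A) (N : ℕ) {s : Set A} (hs : MeasurableSet s) :
    (empiricalMeasure x N).real s = frequency s x (N + 1) := by
  rw [← integral_indicator_one hs,
    integral_empiricalMeasure x N (stronglyMeasurable_one.indicator hs), frequency]

lemma exists_countable_isPiSystem_isTopologicalBasis (A : Type*) [TopologicalSpace A]
    [SecondCountableTopology A] :
    ∃ S : Set (Set A), S.Countable ∧ IsPiSystem S ∧ TopologicalSpace.IsTopologicalBasis S := by
  obtain ⟨b, hb, -, hbasis⟩ := TopologicalSpace.exists_countable_basis A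
  refine ⟨_, (Set.countable_ofPred_finite_subset hb).image _, ?_,
    TopologicalSpace.isTopologicalBasis_of_subbasis hbasis.eq_generateFrom⟩
  rintro - ⟨F, ⟨hF, hFb⟩, rfl⟩ - ⟨G, ⟨hG, hGb⟩, rfl⟩ -
  exact ⟨F ∪ G, ⟨hF.union hG, Set.union_subset hFb hGb⟩, Set.sInter_union F G⟩

theorem tendsto_cesaroMean_of_isTopologicalBasis [TopologicalSpace A] [SecondCountableTopology A]
    [OpensMeasurableSpace A] {S : Set (Set A)} (hpi : IsPiSystem S)
    (hbasis : TopologicalSpace.IsTopologicalBasis S) {x : ℕ → A} {ν : Measure A}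
    [IsProbabilityMeasure ν] (h : ∀ s ∈ S, Tendsto (frequency s x) atTop (𝓝 (ν.real s)))
    (f : A →ᵇ ℝ) :
    Tendsto (cesaroMean fun n => f (x n)) atTop (𝓝 (∫ a, f a ∂ν)) := by
  let emp (N : ℕ) : ProbabilityMeasure A := ⟨empiricalMeasure x N, inferInstance⟩
  have hmeas (s : Set A) (hs : s ∈ S) : MeasurableSet s := (hbasis.isOpen hs).measurableSet
  have hconv : Tendsto emp atTop (𝓝 ⟨ν, inferInstance⟩) := by
    refine hpi.tendsto_probabilityMeasure_of_tendsto_of_mem hmeas (fun u hu a ha => ?_)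
      fun s hs => ?_
    · obtain ⟨s, hs, has, hsu⟩ := hbasis.exists_subset_of_mem_open ha hu
      exact ⟨s, hs, (hbasis.isOpen hs).mem_nhds has, hsu⟩
    · rw [← NNReal.tendsto_coe]
      refine ((h s hs).comp (tendsto_add_atTop_nat 1)).congr fun N => ?_
      exact (real_empiricalMeasure x N (hmeas s hs)).symm
  rw [← tendsto_add_atTop_iff_nat 1]
  refine (ProbabilityMeasure.tendsto_iff_forall_integral_tendsto.1 hconv f).congr fun N => ?_
  exact integral_empiricalMeasure x N f.continuous.measurable.stronglyMeasurable

end EmpiricalMeasure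

section Exchangeable

variable {A : Type*} [MeasurableSpace A] {μ : Measure (ℕ → A)}

/-- A measure on sequences is exchangeable if it is invariant under all finitely supported
permutations of the coordinates. -/
def IsExchangeable (μ : Measure (ℕ → A)) : Prop :=
  ∀ σ, FinitelySupported σ → MeasurePreserving (fun x : ℕ → A => x ∘ σ) μ μ

lemma isExchangeable_map {Ω : Type*} [MeasurableSpace Ω] {P : Measure Ω} {X : ℕ → Ω → A}
    (hX : ∀ n, Measurable (X n))
    (hexch : ∀ σ, FinitelySupported σ →
      P.map (fun ω => fun n => X (σ n) ω) = P.map (fun ω => fun n => X n ω)) :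
    IsExchangeable (P.map fun ω n => X n ω) := fun σ hσ => by
  have hperm : Measurable fun x : ℕ → A => x ∘ σ := by unfold Function.comp; fun_prop
  refine ⟨hperm, ?_⟩
  rw [Measure.map_map hperm (measurable_pi_lambda _ hX)]
  exact hexch σ hσ

lemma IsExchangeable.map_eval (hμ : IsExchangeable μ) (i : ℕ) :
    μ.map (fun x => x i) = μ.map fun x => x 0 := by
  have hmp := hμ _ (finitelySupported_swap 0 i)
  conv_rhs => rw [← hmp.map_eq, Measure.map_map (by fun_prop) hmp.measurable]
  simp [Function.comp_def]

lemma IsExchangeable.map_pair (hμ : IsExchangeable μ) {i j : ℕ} (hij : i ≠ j) :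
    μ.map (fun x => (x i, x j)) = μ.map fun x => (x 0, x 1) := by
  obtain ⟨σ, hσ, rfl, rfl⟩ := exists_finitelySupported_apply_zero_one hij
  have hmp := hμ σ hσ
  conv_rhs => rw [← hmp.map_eq, Measure.map_map (by fun_prop) hmp.measurable]
  rfl

lemma measurable_frequency {s : Set A} (hs : MeasurableSet s) (N : ℕ) :
    Measurable fun x => frequency s x N :=
  (Finset.measurable_fun_sum _ fun n _ =>
    (measurable_one.indicator hs).comp (measurable_pi_apply n)).const_mul _

lemma IsExchangeable.ae_exists_tendsto_frequency [IsFiniteMeasure μ] (hμ : IsExchangeable μ)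
    {s : Set A} (hs : MeasurableSet s) :
    ∀ᵐ x ∂μ, ∃ l, Tendsto (frequency s x) atTop (𝓝 l) := by
  have hind : Measurable (s.indicator (1 : A → ℝ)) := measurable_one.indicator hs
  have hmem (n : ℕ) : MemLp (fun x : ℕ → A => s.indicator (1 : A → ℝ) (x n)) 2 μ :=
    .of_bound (hind.comp (measurable_pi_apply n)).aestronglyMeasurable 1 (ae_of_all _ fun x =>
      (norm_indicator_le_norm_self _ _).trans (by simp))
  have hself (i : ℕ) : ∫ x, s.indicator (1 : A → ℝ) (x i) * s.indicator 1 (x i) ∂μ =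
      ∫ a, s.indicator 1 a * s.indicator 1 a ∂μ.map fun x => x 0 := by
    rw [← hμ.map_eval i, integral_map (measurable_pi_apply i).aemeasurable (by fun_prop)]
  have hpair (i j : ℕ) (hij : i ≠ j) :
      ∫ x, s.indicator (1 : A → ℝ) (x i) * s.indicator 1 (x j) ∂μ =
        ∫ a, s.indicator 1 a.1 * s.indicator 1 a.2 ∂μ.map fun x => (x 0, x 1) := by
    rw [← hμ.map_pair hij, integral_map (by fun_prop) (by fun_prop)]
  exact ae_exists_tendsto_cesaroMean hmem
    (fun _ _ => Set.indicator_apply_nonneg fun _ => zero_le_one) hself hpair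

lemma measurable_limUnder_frequency {s : Set A} (hs : MeasurableSet s) :
    Measurable[pathTail A] fun x => limUnder atTop (frequency s x) := by
  have hshift (m : ℕ) : (fun x => limUnder atTop (frequency s x)) =
      (fun x => limUnder atTop (frequency s x)) ∘ fun (x : ℕ → A) n => x (n + m) := by
    funext x
    -- `limUnder` depends only on the set of limits, so this also holds where there is none.
    exact congrArg Classical.epsilon (funext fun l => propext (tendsto_frequency_shift_iff m).symm)
  have hmeas : Measurable fun x => limUnder atTop (frequency s x) :=
    (StronglyMeasurable.limUnder fun N => (measurable_frequency hs N).stronglyMeasurable).measurable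
  refine fun t ht => measurableSet_pathTail_iff.2 fun m => ⟨_, hmeas ht, ?_⟩
  conv_rhs => rw [hshift m]
  rfl

lemma IsExchangeable.ae_tendsto_limUnder_frequency [IsFiniteMeasure μ] (hμ : IsExchangeable μ)
    {s : Set A} (hs : MeasurableSet s) :
    ∀ᵐ x ∂μ, Tendsto (frequency s x) atTop (𝓝 (limUnder atTop (frequency s x))) :=
  (hμ.ae_exists_tendsto_frequency hs).mono fun _ => tendsto_nhds_limUnder

/- Exchangeability makes `∫⁻ G · 1_s (x n)` independent of `n` along the swaps that fix `G`;
averaging over `n` and letting the number of terms tend to infinity gives the claim. -/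
lemma IsExchangeable.lintegral_mul_indicator (hμ : IsExchangeable μ) {G : (ℕ → A) → ℝ≥0∞}
    (hG : Measurable G) (hGfin : ∫⁻ x, G x ∂μ ≠ ∞) {i : ℕ}
    (hinv : ∀ᶠ n in atTop, ∀ x, G (x ∘ Equiv.swap i n) = G x) {s : Set A} (hs : MeasurableSet s)
    {V : (ℕ → A) → ℝ} (hV : ∀ᵐ x ∂μ, Tendsto (frequency s x) atTop (𝓝 (V x))) :
    ∫⁻ x, G x * s.indicator 1 (x i) ∂μ = ∫⁻ x, G x * ENNReal.ofReal (V x) ∂μ := by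
  have : Measurable (s.indicator (1 : A → ℝ≥0∞)) := measurable_one.indicator hs
  obtain ⟨m, hm⟩ := eventually_atTop.1 hinv
  have hswap (n : ℕ) : ∫⁻ x, G x * s.indicator 1 (x (n + m)) ∂μ =
      ∫⁻ x, G x * s.indicator 1 (x i) ∂μ := by
    have hmp := hμ _ (finitelySupported_swap i (n + m))
    rw [← hmp.lintegral_comp (by fun_prop)]
    simp [hm (n + m) (Nat.le_add_left m n)]
  have haverage (N : ℕ) : ∫⁻ x, G x *
      ENNReal.ofReal (frequency s (fun n => x (n + m)) (N + 1)) ∂μ =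
        ∫⁻ x, G x * s.indicator 1 (x i) ∂μ := by
    simp only [ofReal_frequency, mul_left_comm (G _)]
    rw [lintegral_const_mul _ (by fun_prop)]
    simp only [Finset.mul_sum]
    rw [lintegral_finsetSum _ fun n _ => by fun_prop]
    simp only [hswap, Finset.sum_const, Finset.card_range, nsmul_eq_mul]
    rw [← mul_assoc, ENNReal.inv_mul_cancel (by simp) (by simp), one_mul]
  have hlim := tendsto_lintegral_of_dominated_convergence G
    (F := fun N x => G x * ENNReal.ofReal (frequency s (fun n => x (n + m)) (N + 1)))
    (f := fun x => G x * ENNReal.ofReal (V x)) (μ := μ)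
    (fun N => hG.mul ((measurable_frequency hs _).comp (by fun_prop)).ennreal_ofReal)
    (fun N => ae_of_all _ fun x =>
      mul_le_of_le_one_right' (ENNReal.ofReal_le_one.2 (frequency_le_one _ _ _))) hGfin ?_
  · simp only [haverage] at hlim
    exact tendsto_nhds_unique tendsto_const_nhds hlim
  · filter_upwards [hV, ae_lt_top hG hGfin] with x hx hGx
    exact ENNReal.Tendsto.const_mul (ENNReal.tendsto_ofReal <|
      ((tendsto_frequency_shift_iff m).2 hx).comp (tendsto_add_atTop_nat 1)) (.inr hGx.ne)

variable [StandardBorelSpace A] [IsFiniteMeasure μ]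

/-- The directing random measure of an exchangeable law: the conditional distribution of the first
coordinate given the tail σ-algebra. -/
noncomputable def directingMeasure (μ : Measure (ℕ → A)) [IsFiniteMeasure μ] (x : ℕ → A) :
    Measure A :=
  (condExpKernel μ (pathTail A) x).map fun y => y 0

instance (x : ℕ → A) : IsProbabilityMeasure (directingMeasure μ x) :=
  Measure.isProbabilityMeasure_map (measurable_pi_apply 0).aemeasurable

lemma measurable_directingMeasure : Measurable[pathTail A] (directingMeasure μ) :=
  (Measure.measurable_map _ (measurable_pi_apply 0)).comp (condExpKernel μ (pathTail A)).measurable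

lemma measurable_directingMeasure_apply {s : Set A} (hs : MeasurableSet s) :
    Measurable[pathTail A] fun x => directingMeasure μ x s :=
  (Measure.measurable_coe hs).comp measurable_directingMeasure

lemma setLIntegral_directingMeasure {T : Set (ℕ → A)} (hT : MeasurableSet[pathTail A] T)
    {s : Set A} (hs : MeasurableSet s) :
    ∫⁻ x in T, directingMeasure μ x s ∂μ = μ (T ∩ {x | x 0 ∈ s}) := by
  have heval : Measurable fun x : ℕ → A => x 0 := measurable_pi_apply 0
  simp only [directingMeasure, Measure.map_apply heval hs]
  exact setLIntegral_condExpKernel pathTail_le hT (heval hs)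

namespace IsExchangeable

lemma ofReal_limUnder_frequency_ae_eq (hμ : IsExchangeable μ) {s : Set A} (hs : MeasurableSet s) :
    (fun x => ENNReal.ofReal (limUnder atTop (frequency s x))) =ᵐ[μ]
      fun x => directingMeasure μ x s := by
  have hlim : Measurable[pathTail A] fun x => ENNReal.ofReal (limUnder atTop (frequency s x)) :=
    (measurable_limUnder_frequency hs).ennreal_ofReal
  have hdir := measurable_directingMeasure_apply (μ := μ) hs
  refine ae_eq_of_ae_eq_trim (hm := pathTail_le) <|
    ae_eq_of_forall_setLIntegral_eq_of_sigmaFinite hlim hdir fun T hT _ => ?_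
  have hT' := pathTail_le T hT
  have hind : Measurable[pathTail A] (T.indicator (1 : (ℕ → A) → ℝ≥0∞)) :=
    measurable_const.indicator hT
  rw [setLIntegral_trim pathTail_le hlim hT, setLIntegral_trim pathTail_le hdir hT,
    setLIntegral_directingMeasure hT hs]
  calc ∫⁻ x in T, ENNReal.ofReal (limUnder atTop (frequency s x)) ∂μ
      = ∫⁻ x, T.indicator 1 x * ENNReal.ofReal (limUnder atTop (frequency s x)) ∂μ :=
        (lintegral_indicator_one_mul hT' _).symm
    _ = ∫⁻ x, T.indicator 1 x * s.indicator 1 (x 0) ∂μ :=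
        (hμ.lintegral_mul_indicator (measurable_one.indicator hT') (by simp [hT'])
          (.of_forall fun n => apply_comp_perm_of_measurable_pathTail hind
            (finitelySupported_swap 0 n)) hs (hμ.ae_tendsto_limUnder_frequency hs)).symm
    _ = μ (T ∩ {x | x 0 ∈ s}) := by
        have hpre : MeasurableSet {x : ℕ → A | x 0 ∈ s} := measurable_pi_apply 0 hs
        rw [lintegral_indicator_one_mul hT', Set.inter_comm, ← Measure.restrict_apply hpre,
          ← lintegral_indicator_one hpre]
        rfl

theorem ae_tendsto_frequency (hμ : IsExchangeable μ) {s : Set A} (hs : MeasurableSet s) :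
    ∀ᵐ x ∂μ, Tendsto (frequency s x) atTop (𝓝 ((directingMeasure μ x).real s)) := by
  filter_upwards [hμ.ae_tendsto_limUnder_frequency hs, hμ.ofReal_limUnder_frequency_ae_eq hs]
    with x hlim heq
  have hnonneg := ge_of_tendsto' hlim (frequency_nonneg s x)
  rwa [Measure.real, ← heq, ENNReal.toReal_ofReal hnonneg]

open scoped BoundedContinuousFunction in
theorem ae_tendsto_cesaroMean [TopologicalSpace A] [SecondCountableTopology A]
    [OpensMeasurableSpace A] (hμ : IsExchangeable μ) :
    ∀ᵐ x ∂μ, ∀ f : A →ᵇ ℝ, Tendsto (cesaroMean fun n => f (x n)) atTop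
      (𝓝 (∫ a, f a ∂directingMeasure μ x)) := by
  obtain ⟨S, hS, hpi, hbasis⟩ := exists_countable_isPiSystem_isTopologicalBasis A
  have hfreq := (ae_ball_iff hS).2 fun s hs =>
    hμ.ae_tendsto_frequency (hbasis.isOpen hs).measurableSet
  filter_upwards [hfreq] with x hx f
  exact tendsto_cesaroMean_of_isTopologicalBasis hpi hbasis hx f

theorem lintegral_mul_prod_indicator (hμ : IsExchangeable μ) {t : ℕ → Set A}
    (ht : ∀ j, MeasurableSet (t j)) (S : Finset ℕ) {H : (ℕ → A) → ℝ≥0∞}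
    (hH : Measurable[pathTail A] H) (hHfin : ∫⁻ x, H x ∂μ ≠ ∞) :
    ∫⁻ x, H x * ∏ j ∈ S, (t j).indicator 1 (x j) ∂μ =
      ∫⁻ x, H x * ∏ j ∈ S, directingMeasure μ x (t j) ∂μ := by
  induction S using Finset.induction_on generalizing H with
  | empty => simp
  | insert i S hi ih =>
    have hind (j : ℕ) : Measurable ((t j).indicator (1 : A → ℝ≥0∞)) :=
      measurable_one.indicator (ht j)
    have hG : Measurable fun x => H x * ∏ j ∈ S, (t j).indicator 1 (x j) :=
      (hH.mono pathTail_le le_rfl).mul (by fun_prop)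
    have hGfin : ∫⁻ x, H x * ∏ j ∈ S, (t j).indicator 1 (x j) ∂μ ≠ ∞ :=
      ne_top_of_le_ne_top hHfin <| lintegral_mono fun x => mul_le_of_le_one_right' <|
        Finset.prod_le_one' fun j _ => Set.indicator_le_self' (fun _ _ => zero_le) _
    have hHdir : ∫⁻ x, H x * directingMeasure μ x (t i) ∂μ ≠ ∞ :=
      ne_top_of_le_ne_top hHfin <| lintegral_mono fun x => mul_le_of_le_one_right' prob_le_one
    have hinv : ∀ᶠ n in atTop, ∀ x, H (x ∘ Equiv.swap i n) *
        ∏ j ∈ S, (t j).indicator 1 ((x ∘ Equiv.swap i n) j) =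
          H x * ∏ j ∈ S, (t j).indicator 1 (x j) := by
      filter_upwards [Nat.cofinite_eq_atTop ▸ S.finite_toSet.eventually_cofinite_notMem] with n hn x
      rw [apply_comp_perm_of_measurable_pathTail hH (finitelySupported_swap i n)]
      congr 1
      refine Finset.prod_congr rfl fun j hj => ?_
      rw [Function.comp_apply, Equiv.swap_apply_of_ne_of_ne (ne_of_mem_of_not_mem hj hi)
        (ne_of_mem_of_not_mem hj hn)]
    calc ∫⁻ x, H x * ∏ j ∈ insert i S, (t j).indicator 1 (x j) ∂μ
        = ∫⁻ x, (H x * ∏ j ∈ S, (t j).indicator 1 (x j)) * (t i).indicator 1 (x i) ∂μ := by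
          simp only [Finset.prod_insert hi, mul_right_comm, mul_assoc]
      _ = ∫⁻ x, (H x * ∏ j ∈ S, (t j).indicator 1 (x j)) *
            ENNReal.ofReal ((directingMeasure μ x).real (t i)) ∂μ :=
          hμ.lintegral_mul_indicator hG hGfin hinv (ht i) (hμ.ae_tendsto_frequency (ht i))
      _ = ∫⁻ x, (H x * directingMeasure μ x (t i)) * ∏ j ∈ S, (t j).indicator 1 (x j) ∂μ := by
          simp only [ofReal_measureReal (measure_ne_top _ _), mul_right_comm (H _)]
      _ = ∫⁻ x, (H x * directingMeasure μ x (t i)) * ∏ j ∈ S, directingMeasure μ x (t j) ∂μ :=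
          ih (hH.mul (measurable_directingMeasure_apply (ht i))) hHdir
      _ = ∫⁻ x, H x * ∏ j ∈ insert i S, directingMeasure μ x (t j) ∂μ := by
          simp only [Finset.prod_insert hi, mul_assoc]

lemma measure_inter_pi (hμ : IsExchangeable μ) {T : Set (ℕ → A)} (hT : MeasurableSet[pathTail A] T)
    (S : Finset ℕ) {t : ℕ → Set A} (ht : ∀ j, MeasurableSet (t j)) :
    μ (T ∩ (S : Set ℕ).pi t) = ∫⁻ x in T, ∏ j ∈ S, directingMeasure μ x (t j) ∂μ := by
  have hT' := pathTail_le T hT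
  have hbox : MeasurableSet ((S : Set ℕ).pi t) := .pi S.countable_toSet fun j _ => ht j
  have hind : Measurable[pathTail A] (T.indicator (1 : (ℕ → A) → ℝ≥0∞)) :=
    measurable_const.indicator hT
  rw [← lintegral_indicator_one_mul hT',
    ← hμ.lintegral_mul_prod_indicator ht S hind (by simp [hT']),
    lintegral_indicator_one_mul hT', Set.inter_comm, ← Measure.restrict_apply hbox,
    ← lintegral_indicator_one hbox]
  exact lintegral_congr fun x => Set.indicator_pi_one_apply S t x

lemma measure_inter_forall_fin_mem (hμ : IsExchangeable μ) {T : Set (ℕ → A)}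
    (hT : MeasurableSet[pathTail A] T) {m : ℕ} {s : Fin m → Set A} (hs : ∀ j, MeasurableSet (s j)) :
    μ (T ∩ {x | ∀ j : Fin m, x j ∈ s j}) = ∫⁻ x in T, ∏ j, directingMeasure μ x (s j) ∂μ := by
  set t : ℕ → Set A := fun j => if hj : j < m then s ⟨j, hj⟩ else Set.univ
  have ht_fin (j : Fin m) : t j = s j := dif_pos j.isLt
  have ht (j : ℕ) : MeasurableSet (t j) := by
    unfold t
    split_ifs with hj
    exacts [hs _, .univ]
  have hbox : {x : ℕ → A | ∀ j : Fin m, x j ∈ s j} = (Finset.range m : Set ℕ).pi t := by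
    ext x
    simp +contextual [Set.mem_pi, Fin.forall_iff, t]
  rw [hbox, hμ.measure_inter_pi hT _ ht]
  simp only [Finset.prod_range, ht_fin]

theorem setLIntegral_infinitePi_directingMeasure (hμ : IsExchangeable μ) {T : Set (ℕ → A)}
    (hT : MeasurableSet[pathTail A] T) {B : Set (ℕ → A)} (hB : MeasurableSet B) :
    ∫⁻ x in T, Measure.infinitePi (fun _ : ℕ => directingMeasure μ x) B ∂μ = μ (T ∩ B) := by
  have hker : Measurable fun x => Measure.infinitePi fun _ : ℕ => directingMeasure μ x :=
    measurable_infinitePi_const (measurable_directingMeasure.mono pathTail_le le_rfl)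
  have hbox (S : Finset ℕ) (t : ℕ → Set A) (ht : ∀ j, MeasurableSet (t j)) :
      μ.restrict T ((S : Set ℕ).pi t) =
        (μ.restrict T).bind (fun x => Measure.infinitePi fun _ : ℕ => directingMeasure μ x)
          ((S : Set ℕ).pi t) := by
    have hmeas : MeasurableSet ((S : Set ℕ).pi t) := .pi S.countable_toSet fun j _ => ht j
    rw [Measure.restrict_apply hmeas, Set.inter_comm, hμ.measure_inter_pi hT S ht,
      Measure.bind_apply hmeas hker.aemeasurable]
    simp only [Measure.infinitePi_pi _ fun j _ => ht j]
  have hmix : μ.restrict T =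
      (μ.restrict T).bind fun x => Measure.infinitePi fun _ : ℕ => directingMeasure μ x := by
    refine ext_of_generate_finite _ generateFrom_squareCylinders.symm
      (isPiSystem_squareCylinders (fun _ => MeasurableSpace.isPiSystem_measurableSet)
        fun _ => .univ) ?_ ?_
    · rintro - ⟨S, t, ht, rfl⟩
      exact hbox S t fun j => ht j trivial
    · simpa using hbox ∅ (fun _ => Set.univ) fun _ => .univ
  rw [← Measure.bind_apply hB hker.aemeasurable, ← hmix, Measure.restrict_apply hB, Set.inter_comm]

theorem exists_measurableSet_comap_directingMeasure (hμ : IsExchangeable μ) {T : Set (ℕ → A)}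
    (hT : MeasurableSet[pathTail A] T) :
    ∃ t : Set (ℕ → A), MeasurableSet[MeasurableSpace.comap (directingMeasure μ) inferInstance] t ∧
      μ (symmDiff T t) = 0 := by
  set iid : (ℕ → A) → Measure (ℕ → A) :=
    fun x => Measure.infinitePi fun _ : ℕ => directingMeasure μ x
  have hT' := pathTail_le T hT
  have hiid : Measurable[MeasurableSpace.comap (directingMeasure μ) inferInstance] iid :=
    measurable_infinitePi_const (comap_measurable (directingMeasure μ))
  have ht : MeasurableSet[MeasurableSpace.comap (directingMeasure μ) inferInstance]
      {x | iid x T = 1} :=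
    ((Measure.measurable_coe hT').comp hiid) (measurableSet_singleton 1)
  have httail := measurable_directingMeasure.comap_le _ ht
  refine ⟨_, ht, measure_union_null ?_ ?_⟩
  · rw [Set.sdiff_eq, Set.inter_comm,
      ← hμ.setLIntegral_infinitePi_directingMeasure httail.compl hT']
    exact setLIntegral_eq_zero (pathTail_le _ httail.compl) fun x hx =>
      (infinitePi_eq_zero_or_one_of_measurableSet_pathTail hT).resolve_right hx
  · rw [Set.sdiff_eq, ← hμ.setLIntegral_infinitePi_directingMeasure httail hT'.compl]
    exact setLIntegral_eq_zero (pathTail_le _ httail) fun x hx =>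
      (prob_compl_eq_zero_iff hT').2 hx

end IsExchangeable

end Exchangeable

open scoped BoundedContinuousFunction in
theorem deFinetti_Hewitt_Savage_general {Ω A : Type*} [MeasurableSpace Ω] [TopologicalSpace A]
    [SecondCountableTopology A] [MeasurableSpace A] [OpensMeasurableSpace A] [StandardBorelSpace A]
    (P : Measure Ω) [IsFiniteMeasure P] (X : ℕ → Ω → A) (hX : ∀ n, Measurable (X n))
    (hexch : ∀ σ, FinitelySupported σ →
      P.map (fun ω => fun n => X (σ n) ω) = P.map (fun ω => fun n => X n ω)) :
    ∃ W : Ω → Measure A,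
      Measurable W ∧ (∀ ω, IsProbabilityMeasure (W ω)) ∧
      (∀ᵐ ω ∂P, ∀ f : A →ᵇ ℝ,
        Tendsto (fun N : ℕ => (N : ℝ)⁻¹ * ∑ n ∈ Finset.range N, f (X n ω)) atTop
          (𝓝 (∫ a, f a ∂(W ω)))) ∧
      (∃ g : (ℕ → A) → Measure A, Measurable g ∧ ∀ᵐ ω ∂P, W ω = g (fun n => X n ω)) ∧
      ((∀ s : Set Ω,
          MeasurableSet[⨅ N : ℕ, MeasurableSpace.comap (fun ω => fun n => X (n + N) ω)
            inferInstance] s →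
          ∃ t : Set Ω, MeasurableSet[MeasurableSpace.comap W inferInstance] t ∧
            P (symmDiff s t) = 0) ∧
        (∀ t : Set Ω, MeasurableSet[MeasurableSpace.comap W inferInstance] t →
          ∃ s : Set Ω,
            MeasurableSet[⨅ N : ℕ, MeasurableSpace.comap (fun ω => fun n => X (n + N) ω)
              inferInstance] s ∧ P (symmDiff s t) = 0)) ∧
      (∀ (m : ℕ) (s : Fin m → Set A), (∀ j, MeasurableSet (s j)) →
        ∀ t : Set (Measure A), MeasurableSet t →
          P ({ω | W ω ∈ t} ∩ {ω | ∀ j : Fin m, X j ω ∈ s j})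
            = ∫⁻ ω in {ω | W ω ∈ t}, ∏ j : Fin m, W ω (s j) ∂P) := by
  let path (ω : Ω) (n : ℕ) : A := X n ω
  have hpath : Measurable path := measurable_pi_lambda _ hX
  have hμ := isExchangeable_map hX hexch
  have hdir := measurable_directingMeasure (μ := P.map path)
  have hdir' := hdir.mono pathTail_le le_rfl
  refine ⟨fun ω => directingMeasure (P.map path) (path ω), hdir'.comp hpath, inferInstance,
    ae_of_ae_map hpath.aemeasurable hμ.ae_tendsto_cesaroMean,
    ⟨directingMeasure (P.map path), hdir', .of_forall fun _ => rfl⟩, ⟨?_, ?_⟩,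
    fun m s hs t ht => ?_⟩
  · rw [iInf_comap_shift_eq_comap_pathTail]
    rintro - ⟨T, hT, rfl⟩
    obtain ⟨-, ⟨t, ht, rfl⟩, hnull⟩ := hμ.exists_measurableSet_comap_directingMeasure hT
    refine ⟨_, ⟨t, ht, rfl⟩, ?_⟩
    rwa [Measure.map_apply hpath ((pathTail_le T hT).symmDiff (hdir' ht))] at hnull
  · rw [iInf_comap_shift_eq_comap_pathTail]
    rintro - ⟨t, ht, rfl⟩
    exact ⟨_, ⟨_, hdir ht, rfl⟩, by simp [← Set.preimage_comp, Function.comp_def, path]⟩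
  · have hbox : MeasurableSet {x : ℕ → A | ∀ j : Fin m, x j ∈ s j} := by
      simp only [Set.ofPred_forall]
      exact .iInter fun j => measurable_pi_apply _ (hs j)
    have hprod : Measurable fun x => ∏ j, directingMeasure (P.map path) x (s j) :=
      Finset.measurable_fun_prod _ fun j _ => (Measure.measurable_coe (hs j)).comp hdir'
    have h := hμ.measure_inter_forall_fin_mem (hdir ht) hs
    rwa [Measure.map_apply hpath ((hdir' ht).inter hbox), setLIntegral_map (hdir' ht) hprod hpath]
      at h

/-- de Finetti–Hewitt–Savage Theorem (strong form): if `A` is a compact metric space and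
`(X_n)_n` is an exchangeable sequence of `A`-valued random variables, then the empirical
distributions `W_N = N⁻¹ ∑_{n<N} δ_{X_n}` converge almost surely weakly-* to a random
probability measure `W` such that (i) `W` is a.s. a measurable function of `(X_n)_n`,
(ii) `W` generates the tail σ-algebra of `(X_n)_n` up to null sets, and (iii) the `X_n`
are conditionally i.i.d. with law `W` given `W`. -/
theorem deFinetti_Hewitt_Savage {Ω A : Type*} [MeasurableSpace Ω]
    [MetricSpace A] [CompactSpace A] [MeasurableSpace A] [BorelSpace A]
    (P : Measure Ω) [IsProbabilityMeasure P]
    (X : ℕ → Ω → A) (hX : ∀ n, Measurable (X n))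
    (hexch : ∀ σ, FinitelySupported σ →
      P.map (fun ω => fun n => X (σ n) ω) = P.map (fun ω => fun n => X n ω)) :
    ∃ W : Ω → Measure A,
      Measurable W ∧ (∀ ω, IsProbabilityMeasure (W ω)) ∧
      -- a.s. weak-* convergence of the empirical distributions to `W`
      (∀ᵐ ω ∂P, ∀ f : C(A, ℝ),
        Tendsto (fun N : ℕ => (N : ℝ)⁻¹ * ∑ n ∈ Finset.range N, f (X n ω)) atTop
          (nhds (∫ a, f a ∂(W ω)))) ∧
      -- (i) `W` is a.s. a function of the sequence `(X_n)_n`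
      (∃ g : (ℕ → A) → Measure A, Measurable g ∧
        ∀ᵐ ω ∂P, W ω = g (fun n => X n ω)) ∧
      -- (ii) `W` generates the tail σ-algebra up to `P`-null sets
      ((∀ s : Set Ω,
          MeasurableSet[⨅ N : ℕ, MeasurableSpace.comap (fun ω => fun n => X (n + N) ω)
            inferInstance] s →
          ∃ t : Set Ω, MeasurableSet[MeasurableSpace.comap W inferInstance] t ∧
            P (symmDiff s t) = 0) ∧
        (∀ t : Set Ω, MeasurableSet[MeasurableSpace.comap W inferInstance] t →
          ∃ s : Set Ω,
            MeasurableSet[⨅ N : ℕ, MeasurableSpace.comap (fun ω => fun n => X (n + N) ω)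
              inferInstance] s ∧ P (symmDiff s t) = 0)) ∧
      -- (iii) the `X_n` are conditionally i.i.d. with law `W` given `W`
      (∀ (m : ℕ) (s : Fin m → Set A), (∀ j, MeasurableSet (s j)) →
        ∀ t : Set (Measure A), MeasurableSet t →
          P ({ω | W ω ∈ t} ∩ {ω | ∀ j : Fin m, X j ω ∈ s j})
            = ∫⁻ ω in {ω | W ω ∈ t}, ∏ j : Fin m, W ω (s j) ∂P) := by
  obtain ⟨W, hW, hprob, hlim, h⟩ := deFinetti_Hewitt_Savage_general P X hX hexch
  exact ⟨W, hW, hprob, hlim.mono fun _ hω f => hω (.mkOfCompact f), h⟩
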